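/- For every integer n > 16, every positive integer N, and every n-linear form U : (ℝ^N)^n → ℝ, one has (∑_{i₁,…,iₙ=1}^N |U(e_{i₁},…,e_{iₙ})|^{2n/(n+1)})^{(n+1)/(2n)} < 1.338887 · (n-1)^{0.526322} · ‖U‖, provided ‖U‖ > 0. -/

import Mathlib

open Real

/-- The Bohnenblust--Hille quantity of an `n`-linear form on `ℓ_∞^N` over `ℝ`:
`(∑_{i₁,…,iₙ} |U(e_{i₁},…,e_{iₙ})|^{2n/(n+1)})^{(n+1)/(2n)}`. -/
noncomputable def BHreal (n N : ℕ)
    (U : ContinuousMultilinearMap ℝ (fun _ : Fin n => (Fin N → ℝ)) ℝ) : ℝ :=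
  (∑ i : Fin n → Fin N,
      |U (fun k => Pi.single (i k) (1 : ℝ))| ^ ((2 * n : ℝ) / (n + 1)))
    ^ ((n + 1 : ℝ) / (2 * n))

/-!
The proof is by induction on the number of variables. Evaluating one variable of a form `U` at a
vector of signs gives a form with one variable fewer and norm at most `‖U‖`, to which the inductive
bound applies; averaging over the signs and using Khinchine's inequality in that variable bounds, in
every direction `j`, a mixed norm of the coefficients that is `ℓ²` in direction `j`. Blei's
inequality, which follows from the inequalities of Hölder and Loomis–Whitney, combines these mixed
norms into the Bohnenblust–Hille quantity.

Khinchine's inequality comes from interpolating the second moment of a Rademacher sum between its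
`p`-th and third absolute moments. The normalized third moment is at most `5 / 3`, because `|x| ^
3` lies below an even polynomial of degree 8, whose mean is computed from exact even moments. Hence
each step costs a factor `(5 / 3) ^ (1 / n)`, the constant for `n + 1` variables is `(5 / 3) ^ H
n`, and its growth exponent is `log (5 / 3) < 0.526322`.
-/

open scoped BigOperators NNReal

section Holder

variable {α ι : Type*} [Fintype α] [Fintype ι]

theorem sum_prod_rpow_le_prod_sum_rpow (f : ι → α → ℝ≥0) {w : ι → ℝ} (hw₀ : ∀ i, 0 ≤ w i)
    (hw₁ : ∑ i, w i = 1) :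
    ∑ a, ∏ i, f i a ^ w i ≤ ∏ i, (∑ a, f i a) ^ w i := by
  let _ : MeasurableSpace α := ⊤
  have h := ENNReal.lintegral_prod_norm_pow_le (μ := MeasureTheory.Measure.count) Finset.univ
    (f := fun i a => (f i a : ENNReal)) (fun _ _ => measurable_from_top.aemeasurable) hw₁
    (fun i _ => hw₀ i)
  simp only [MeasureTheory.lintegral_fintype, MeasureTheory.Measure.count_singleton, mul_one,
    ← ENNReal.coe_rpow_of_nonneg _ (hw₀ _), ← ENNReal.ofNNReal_finsetSum,
    ← ENNReal.ofNNReal_finsetProd] at h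
  exact_mod_cast h

theorem sum_mul_prod_rpow_le (g : α → ℝ≥0) (f : ι → α → ℝ≥0) {q : ℝ} {p : ι → ℝ} (hq : 0 ≤ q)
    (hp : ∀ i, 0 ≤ p i) (hpq : q + ∑ i, p i = 1) :
    ∑ a, g a ^ q * ∏ i, f i a ^ p i ≤ (∑ a, g a) ^ q * ∏ i, (∑ a, f i a) ^ p i := by
  simpa [Fintype.prod_option] using
    sum_prod_rpow_le_prod_sum_rpow (fun o : Option ι => o.elim g f) (w := fun o => o.elim q p)
      (by rintro (_ | i); exacts [hq, hp i]) (by simpa [Fintype.sum_option] using hpq)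

theorem sum_rpow_mul_rpow_le (f g : α → ℝ≥0) {p q : ℝ} (hp : 0 ≤ p) (hq : 0 ≤ q)
    (hpq : p + q = 1) :
    ∑ a, f a ^ p * g a ^ q ≤ (∑ a, f a) ^ p * (∑ a, g a) ^ q := by
  simpa using sum_mul_prod_rpow_le f (fun _ : Unit => g) (p := fun _ => q) hp (fun _ => hq)
    (by simpa using hpq)

theorem expect_rpow_mul_rpow_le (f g : α → ℝ≥0) {p q : ℝ} (hp : 0 ≤ p) (hq : 0 ≤ q)
    (hpq : p + q = 1) :
    𝔼 a, f a ^ p * g a ^ q ≤ (𝔼 a, f a) ^ p * (𝔼 a, g a) ^ q := by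
  have hcard :
      (Fintype.card α : ℝ≥0) = (Fintype.card α : ℝ≥0) ^ p * (Fintype.card α : ℝ≥0) ^ q := by
    rw [← NNReal.rpow_add_of_nonneg _ hp hq, hpq, NNReal.rpow_one]
  simp only [Fintype.expect_eq_sum_div_card, NNReal.div_rpow, div_mul_div_comm, ← hcard]
  gcongr
  exact sum_rpow_mul_rpow_le f g hp hq hpq

theorem expect_rpow_rpow_le (f : α → ℝ≥0) {p q r : ℝ} (hp : 0 ≤ p) (hpq : p ≤ q) (hqr : q ≤ r)
    (hpr : p < r) :
    (𝔼 a, f a ^ q) ^ (r - p) ≤ (𝔼 a, f a ^ p) ^ (r - q) * (𝔼 a, f a ^ r) ^ (q - p) := by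
  have hrp : 0 < r - p := sub_pos.2 hpr
  have hu : 0 ≤ (r - q) / (r - p) := div_nonneg (sub_nonneg.2 hqr) hrp.le
  have hv : 0 ≤ (q - p) / (r - p) := div_nonneg (sub_nonneg.2 hpq) hrp.le
  have hsplit (a : α) :
      f a ^ q = (f a ^ p) ^ ((r - q) / (r - p)) * (f a ^ r) ^ ((q - p) / (r - p)) := by
    rw [← NNReal.rpow_mul, ← NNReal.rpow_mul, ← NNReal.rpow_add_of_nonneg _ (by positivity)
      (mul_nonneg (hp.trans hpr.le) hv)]
    congr 1
    field_simp
    ring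
  have h := expect_rpow_mul_rpow_le (fun a => f a ^ p) (fun a => f a ^ r) hu hv
    (by field_simp; ring)
  simp only [← hsplit] at h
  simpa only [NNReal.mul_rpow, ← NNReal.rpow_mul, div_mul_cancel₀ _ hrp.ne'] using
    NNReal.rpow_le_rpow h hrp.le

end Holder

section LoomisWhitney

theorem removeNth_succ_cons {α : Type*} {n : ℕ} (j : Fin (n + 1)) (x : α) (y : Fin (n + 1) → α) :
    j.succ.removeNth (Fin.cons x y : Fin (n + 2) → α) =
      (Fin.cons x (j.removeNth y) : Fin (n + 1) → α) := by
  funext i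
  refine Fin.cases ?_ (fun i => ?_) i <;> simp [Fin.removeNth]

variable {α : Type*} [Fintype α] {n : ℕ}

theorem sum_eq_sum_insertNth {M : Type*} [AddCommMonoid M] (j : Fin (n + 1))
    (F : (Fin (n + 1) → α) → M) :
    ∑ i, F i = ∑ x, ∑ y : Fin n → α, F (j.insertNth x y) := by
  rw [← Fintype.sum_prod_type' (f := fun x (y : Fin n → α) => F (j.insertNth x y))]
  exact (Fintype.sum_equiv (Fin.insertNthEquiv (fun _ => α) j) _ _ fun _ => rfl).symm

theorem sum_eq_sum_cons {M : Type*} [AddCommMonoid M] (F : (Fin (n + 1) → α) → M) :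
    ∑ i, F i = ∑ x, ∑ y : Fin n → α, F (Fin.cons x y) := by
  simpa using sum_eq_sum_insertNth 0 F

theorem sum_prod_removeNth_fin_two (g : Fin 2 → (Fin 1 → α) → ℝ≥0) :
    ∑ i : Fin 2 → α, ∏ j, g j (j.removeNth i) = ∏ j, ∑ y, g j y := by
  have hsplit (x : α) (y : Fin 1 → α) :
      (1 : Fin 2).removeNth (Fin.cons x y : Fin 2 → α) = (Fin.cons x default : Fin 1 → α) :=
    (removeNth_succ_cons 0 x y).trans (congrArg _ (Subsingleton.elim _ _))
  rw [sum_eq_sum_cons, Fin.prod_univ_two, sum_eq_sum_cons (g 1), Finset.sum_comm,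
    Finset.sum_mul_sum]
  simp [hsplit, Fin.prod_univ_two]

theorem loomis_whitney (g : Fin (n + 2) → (Fin (n + 1) → α) → ℝ≥0) :
    ∑ i : Fin (n + 2) → α, ∏ j, g j (j.removeNth i) ^ ((n : ℝ) + 1)⁻¹ ≤
      ∏ j, (∑ y, g j y) ^ ((n : ℝ) + 1)⁻¹ := by
  induction n with
  | zero => simpa using (sum_prod_removeNth_fin_two g).le
  | succ n ih =>
    push_cast
    set r : ℝ := ((n : ℝ) + 1 + 1)⁻¹ with hr
    have hr₀ : 0 ≤ r := by positivity
    have hr₁ : 1 - r = (n + 1) * r := by rw [hr]; field_simp; ring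
    have hpow : ((n : ℝ) + 1)⁻¹ * (1 - r) = r := by rw [hr₁]; field_simp
    have hslice (x : α) :
        ∑ y : Fin (n + 2) → α,
            g 0 y ^ r * ∏ j : Fin (n + 2), g j.succ (Fin.cons x (j.removeNth y)) ^ r ≤
          (∑ y, g 0 y) ^ r * ∏ j : Fin (n + 2), (∑ z, g j.succ (Fin.cons x z)) ^ r := by
      have h := (sum_rpow_mul_rpow_le (g 0) (fun y =>
          ∏ j : Fin (n + 2), g j.succ (Fin.cons x (j.removeNth y)) ^ ((n : ℝ) + 1)⁻¹) hr₀
          (hr₁ ▸ by positivity) (add_sub_cancel r 1)).trans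
        (mul_le_mul_right (NNReal.rpow_le_rpow (ih fun j z => g j.succ (Fin.cons x z))
          (hr₁ ▸ by positivity)) _)
      simpa only [← NNReal.finsetProd_rpow, ← NNReal.rpow_mul, hpow] using h
    calc ∑ i : Fin (n + 3) → α, ∏ j, g j (j.removeNth i) ^ r
        = ∑ x, ∑ y : Fin (n + 2) → α,
            g 0 y ^ r * ∏ j : Fin (n + 2), g j.succ (Fin.cons x (j.removeNth y)) ^ r := by
          simp_rw [sum_eq_sum_cons (n := n + 2), Fin.prod_univ_succ (n := n + 2),
            removeNth_succ_cons, Fin.removeNth_zero, Fin.tail_cons]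
      _ ≤ ∑ x, (∑ y, g 0 y) ^ r *
            ∏ j : Fin (n + 2), (∑ z, g j.succ (Fin.cons x z)) ^ r :=
          Finset.sum_le_sum fun x _ => hslice x
      _ ≤ (∑ y, g 0 y) ^ r *
            ∏ j : Fin (n + 2), (∑ x, ∑ z, g j.succ (Fin.cons x z)) ^ r := by
          rw [← Finset.mul_sum]
          gcongr
          refine sum_prod_rpow_le_prod_sum_rpow
            (fun (j : Fin (n + 2)) x => ∑ z, g j.succ (Fin.cons x z)) (fun _ => hr₀) ?_
          simp [hr]
          field_simp
          ring
      _ = ∏ j, (∑ y, g j y) ^ r := by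
          simp_rw [Fin.prod_univ_succ (n := n + 2), sum_eq_sum_cons (g (Fin.succ _))]

end LoomisWhitney

section Blei

/-- The exponent `2n / (n + 1)` of the Bohnenblust–Hille inequality for `n`-linear forms. -/
noncomputable def bhExponent (n : ℕ) : ℝ := 2 * n / (n + 1)

theorem bhExponent_succ_pos (n : ℕ) : 0 < bhExponent (n + 1) := by
  unfold bhExponent
  positivity

theorem bhExponent_le_two (n : ℕ) : bhExponent n ≤ 2 := by
  rw [bhExponent, div_le_iff₀ (by positivity)]
  linarith

variable {α : Type*} [Fintype α] {n : ℕ}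

/-- The sum of the squares of `f` over the line in direction `j` through the points that agree with
`y` in all other coordinates. Its square root is the inner norm in Blei's mixed-norm inequality. -/
def sumSqLine (f : (Fin (n + 1) → α) → ℝ≥0) (j : Fin (n + 1)) (y : Fin n → α) : ℝ≥0 :=
  ∑ x, f (j.insertNth x y) ^ 2

theorem sq_le_sumSqLine_removeNth (f : (Fin (n + 1) → α) → ℝ≥0) (j : Fin (n + 1))
    (i : Fin (n + 1) → α) : f i ^ 2 ≤ sumSqLine f j (j.removeNth i) := by
  simpa [sumSqLine] using Finset.single_le_sum (f := fun x => f (j.insertNth x (j.removeNth i)) ^ 2)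
    (fun _ _ => zero_le) (Finset.mem_univ (i j))

theorem sum_sq_mul_sumSqLine_rpow_le (f : (Fin (n + 1) → α) → ℝ≥0) (j : Fin (n + 1)) (s : ℝ) :
    ∑ i, f i ^ 2 * sumSqLine f j (j.removeNth i) ^ (s - 1) ≤ ∑ y, sumSqLine f j y ^ s := by
  rw [sum_eq_sum_insertNth j, Finset.sum_comm]
  refine Finset.sum_le_sum fun y _ => ?_
  simp only [Fin.removeNth_insertNth, ← Finset.sum_mul]
  change sumSqLine f j y * sumSqLine f j y ^ (s - 1) ≤ sumSqLine f j y ^ s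
  rcases eq_or_ne (sumSqLine f j y) 0 with h | h
  · simp [h]
  · rw [NNReal.rpow_sub_one h, mul_div_cancel₀ _ h]

theorem rpow_bhExponent_le_prod {x : ℝ≥0} {F : Fin (n + 2) → ℝ≥0} (hF : ∀ j, x ^ 2 ≤ F j) :
    x ^ bhExponent (n + 2) ≤
      (∏ j, (F j ^ (bhExponent (n + 1) / 2)) ^ ((n : ℝ) + 1)⁻¹) ^ ((n : ℝ) + 3)⁻¹ *
        ∏ j, (x ^ 2 * F j ^ (bhExponent (n + 1) / 2 - 1)) ^ ((n : ℝ) + 3)⁻¹ := by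
  rcases eq_or_ne x 0 with rfl | hx
  · rw [NNReal.zero_rpow (bhExponent_succ_pos _).ne']
    exact zero_le
  -- The exponents are chosen so that the powers of every `F j` cancel.
  have hfactor (j : Fin (n + 2)) :
      ((F j ^ (bhExponent (n + 1) / 2)) ^ ((n : ℝ) + 1)⁻¹) ^ ((n : ℝ) + 3)⁻¹ *
        (x ^ 2 * F j ^ (bhExponent (n + 1) / 2 - 1)) ^ ((n : ℝ) + 3)⁻¹ =
      x ^ (2 * ((n : ℝ) + 3)⁻¹) := by
    have hFj : F j ≠ 0 := ((pow_pos hx.bot_lt 2).trans_le (hF j)).ne'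
    have hexp : bhExponent (n + 1) / 2 * ((n : ℝ) + 1)⁻¹ + (bhExponent (n + 1) / 2 - 1) = 0 := by
      unfold bhExponent
      push_cast
      field_simp
      ring
    rw [← NNReal.mul_rpow, mul_left_comm, ← NNReal.rpow_mul, ← NNReal.rpow_add hFj, hexp,
      NNReal.rpow_zero, mul_one, ← NNReal.rpow_two, ← NNReal.rpow_mul]
  rw [← NNReal.finsetProd_rpow, ← Finset.prod_mul_distrib,
    Finset.prod_congr rfl fun j _ => hfactor j, Finset.prod_const, Finset.card_fin,
    ← NNReal.rpow_mul_natCast]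
  refine (congrArg (x ^ ·) ?_).le
  unfold bhExponent
  push_cast
  field_simp
  ring

theorem blei (f : (Fin (n + 2) → α) → ℝ≥0) {C : ℝ≥0}
    (hC : ∀ j, ∑ y, sumSqLine f j y ^ (bhExponent (n + 1) / 2) ≤ C ^ bhExponent (n + 1)) :
    ∑ i, f i ^ bhExponent (n + 2) ≤ C ^ bhExponent (n + 2) := by
  set q := bhExponent (n + 1) with hq
  have hLW : ∑ i : Fin (n + 2) → α,
      ∏ j, (sumSqLine f j (j.removeNth i) ^ (q / 2)) ^ ((n : ℝ) + 1)⁻¹ ≤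
        ∏ _j : Fin (n + 2), (C ^ q) ^ ((n : ℝ) + 1)⁻¹ :=
    (loomis_whitney fun j y => sumSqLine f j y ^ (q / 2)).trans <|
      Finset.prod_le_prod' fun j _ => NNReal.rpow_le_rpow (hC j) (by positivity)
  have hline (j : Fin (n + 2)) :
      ∑ i, f i ^ 2 * sumSqLine f j (j.removeNth i) ^ (q / 2 - 1) ≤ C ^ q :=
    (sum_sq_mul_sumSqLine_rpow_le f j _).trans (hC j)
  calc ∑ i, f i ^ bhExponent (n + 2)
      ≤ ∑ i : Fin (n + 2) → α,
          (∏ j, (sumSqLine f j (j.removeNth i) ^ (q / 2)) ^ ((n : ℝ) + 1)⁻¹) ^ ((n : ℝ) + 3)⁻¹ *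
            ∏ j, (f i ^ 2 * sumSqLine f j (j.removeNth i) ^ (q / 2 - 1)) ^ ((n : ℝ) + 3)⁻¹ :=
        Finset.sum_le_sum fun i _ => rpow_bhExponent_le_prod fun j =>
          sq_le_sumSqLine_removeNth f j i
    _ ≤ (∑ i : Fin (n + 2) → α,
          ∏ j, (sumSqLine f j (j.removeNth i) ^ (q / 2)) ^ ((n : ℝ) + 1)⁻¹) ^ ((n : ℝ) + 3)⁻¹ *
          ∏ j, (∑ i, f i ^ 2 * sumSqLine f j (j.removeNth i) ^ (q / 2 - 1)) ^ ((n : ℝ) + 3)⁻¹ := by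
        refine sum_mul_prod_rpow_le _
          (fun j i => f i ^ 2 * sumSqLine f j (j.removeNth i) ^ (q / 2 - 1))
          (p := fun _ => ((n : ℝ) + 3)⁻¹) (by positivity) (fun _ => by positivity) ?_
        simp only [Finset.sum_const, Finset.card_fin, nsmul_eq_mul]
        push_cast
        field_simp
        ring
    _ ≤ (∏ _j : Fin (n + 2), (C ^ q) ^ ((n : ℝ) + 1)⁻¹) ^ ((n : ℝ) + 3)⁻¹ *
          ∏ _j : Fin (n + 2), (C ^ q) ^ ((n : ℝ) + 3)⁻¹ := by
        gcongr with j
        exact hline j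
    _ = C ^ bhExponent (n + 2) := by
        simp only [Finset.prod_const, Finset.card_fin, ← NNReal.rpow_mul,
          ← NNReal.rpow_mul_natCast]
        rw [← NNReal.rpow_add_of_nonneg]
        · congr 1
          rw [hq]
          unfold bhExponent
          push_cast
          field_simp
          ring
        all_goals rw [hq]; unfold bhExponent; positivity

end Blei

section Khinchine

variable {ι : Type*}

/-- The Rademacher sum `∑ i ∈ s, ε i * a i`. A sign pattern is an `ε : ι → ℤˣ`, and averages over
signs are taken over all of `ι → ℤˣ`, so that the probability space does not depend on `s`. -/
def rademacherSum (s : Finset ι) (a : ι → ℝ) (ε : ι → ℤˣ) : ℝ := ∑ i ∈ s, ((ε i : ℤ) : ℝ) * a i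

theorem exists_rademacherSum_eq_sum_abs (s : Finset ι) (a : ι → ℝ) :
    ∃ ε, rademacherSum s a ε = ∑ i ∈ s, |a i| := by
  refine ⟨fun i => if 0 ≤ a i then 1 else -1, Finset.sum_congr rfl fun i _ => ?_⟩
  rcases le_or_gt 0 (a i) with h | h
  · simp [h, abs_of_nonneg h]
  · simp [h.not_ge, abs_of_neg h]

theorem rademacherSum_div (s : Finset ι) (a : ι → ℝ) (c : ℝ) (ε : ι → ℤˣ) :
    rademacherSum s (fun i => a i / c) ε = rademacherSum s a ε / c := by
  simp only [rademacherSum, Finset.sum_div, mul_div_assoc]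

variable [Fintype ι] [DecidableEq ι]

theorem expect_rademacherSum_insert {s : Finset ι} {b : ι} (hb : b ∉ s) (a : ι → ℝ) (F : ℝ → ℝ) :
    𝔼 ε, F (rademacherSum (insert b s) a ε) =
      (𝔼 ε, (F (rademacherSum s a ε + a b) + F (rademacherSum s a ε - a b))) / 2 := by
  set flip : (ι → ℤˣ) ≃ (ι → ℤˣ) := Equiv.mulRight (Pi.mulSingle b (-1)) with hflip
  have hinsert (ε : ι → ℤˣ) :
      rademacherSum (insert b s) a ε = rademacherSum s a ε + (ε b : ℤ) * a b := by
    simp only [rademacherSum, Finset.sum_insert hb, add_comm]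
  have hflip_sum (ε : ι → ℤˣ) : rademacherSum s a (flip ε) = rademacherSum s a ε :=
    Finset.sum_congr rfl fun i hi => by
      simp [hflip, Pi.mulSingle_eq_of_ne (ne_of_mem_of_not_mem hi hb)]
  have hflip_b (ε : ι → ℤˣ) : flip ε b = -ε b := by simp [hflip]
  have hsymm : 𝔼 ε, F (rademacherSum (insert b s) a ε) =
      𝔼 ε, F (rademacherSum s a ε - (ε b : ℤ) * a b) := by
    refine (Fintype.expect_equiv flip _ _ fun ε => ?_).symm
    simp [hinsert, hflip_sum, hflip_b, sub_eq_add_neg]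
  have hpair (ε : ι → ℤˣ) :
      F (rademacherSum s a ε + (ε b : ℤ) * a b) + F (rademacherSum s a ε - (ε b : ℤ) * a b) =
        F (rademacherSum s a ε + a b) + F (rademacherSum s a ε - a b) := by
    rcases Int.units_eq_one_or (ε b) with h | h <;> simp [h, add_comm, sub_eq_add_neg]
  rw [← Finset.expect_congr rfl fun ε _ => hpair ε, Finset.expect_add_distrib, ← hsymm,
    ← Finset.expect_congr rfl fun ε _ => congrArg F (hinsert ε)]
  ring

theorem expect_rademacherSum_sq (s : Finset ι) (a : ι → ℝ) :
    𝔼 ε, rademacherSum s a ε ^ 2 = ∑ i ∈ s, a i ^ 2 := by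
  induction s using Finset.induction_on with
  | empty => simp [rademacherSum]
  | insert b s hb ih =>
    have hbinom (S : ℝ) : (S + a b) ^ 2 + (S - a b) ^ 2 = 2 * S ^ 2 + 2 * a b ^ 2 := by ring
    simp only [expect_rademacherSum_insert hb a (· ^ 2), hbinom, Finset.expect_add_distrib,
      ← Finset.mul_expect, Fintype.expect_const, ih, Finset.sum_insert hb]
    ring

theorem expect_rademacherSum_pow_four (s : Finset ι) (a : ι → ℝ) :
    𝔼 ε, rademacherSum s a ε ^ 4 = 3 * (∑ i ∈ s, a i ^ 2) ^ 2 - 2 * ∑ i ∈ s, a i ^ 4 := by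
  induction s using Finset.induction_on with
  | empty => simp [rademacherSum]
  | insert b s hb ih =>
    have hbinom (S : ℝ) : (S + a b) ^ 4 + (S - a b) ^ 4 =
        2 * S ^ 4 + 12 * a b ^ 2 * S ^ 2 + 2 * a b ^ 4 := by ring
    simp only [expect_rademacherSum_insert hb a (· ^ 4), hbinom, Finset.expect_add_distrib,
      ← Finset.mul_expect, Fintype.expect_const, ih, expect_rademacherSum_sq,
      Finset.sum_insert hb]
    ring

theorem expect_rademacherSum_pow_six (s : Finset ι) (a : ι → ℝ) :
    𝔼 ε, rademacherSum s a ε ^ 6 = 15 * (∑ i ∈ s, a i ^ 2) ^ 3 -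
      30 * (∑ i ∈ s, a i ^ 2) * (∑ i ∈ s, a i ^ 4) + 16 * ∑ i ∈ s, a i ^ 6 := by
  induction s using Finset.induction_on with
  | empty => simp [rademacherSum]
  | insert b s hb ih =>
    have hbinom (S : ℝ) : (S + a b) ^ 6 + (S - a b) ^ 6 =
        2 * S ^ 6 + 30 * a b ^ 2 * S ^ 4 + 30 * a b ^ 4 * S ^ 2 + 2 * a b ^ 6 := by ring
    simp only [expect_rademacherSum_insert hb a (· ^ 6), hbinom, Finset.expect_add_distrib,
      ← Finset.mul_expect, Fintype.expect_const, ih, expect_rademacherSum_sq,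
      expect_rademacherSum_pow_four, Finset.sum_insert hb]
    ring

theorem expect_rademacherSum_pow_eight (s : Finset ι) (a : ι → ℝ) :
    𝔼 ε, rademacherSum s a ε ^ 8 = 105 * (∑ i ∈ s, a i ^ 2) ^ 4 -
      420 * (∑ i ∈ s, a i ^ 2) ^ 2 * (∑ i ∈ s, a i ^ 4) +
      448 * (∑ i ∈ s, a i ^ 2) * (∑ i ∈ s, a i ^ 6) + 140 * (∑ i ∈ s, a i ^ 4) ^ 2 -
      272 * ∑ i ∈ s, a i ^ 8 := by
  induction s using Finset.induction_on with
  | empty => simp [rademacherSum]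
  | insert b s hb ih =>
    have hbinom (S : ℝ) : (S + a b) ^ 8 + (S - a b) ^ 8 =
        2 * S ^ 8 + 56 * a b ^ 2 * S ^ 6 + 140 * a b ^ 4 * S ^ 4 + 56 * a b ^ 6 * S ^ 2 +
          2 * a b ^ 8 := by ring
    simp only [expect_rademacherSum_insert hb a (· ^ 8), hbinom, Finset.expect_add_distrib,
      ← Finset.mul_expect, Fintype.expect_const, ih, expect_rademacherSum_sq,
      expect_rademacherSum_pow_four, expect_rademacherSum_pow_six, Finset.sum_insert hb]
    ring

-- The even polynomial is tangent to `|x| ^ 3` at `0`, `3 / 2` and `3`.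
theorem abs_pow_three_le (x : ℝ) :
    |x| ^ 3 ≤ 11 / 18 * x ^ 2 + 25 / 54 * x ^ 4 - 8 / 243 * x ^ 6 + 8 / 6561 * x ^ 8 := by
  have hfactor (y : ℝ) :
      11 / 18 * y ^ 2 + 25 / 54 * y ^ 4 - 8 / 243 * y ^ 6 + 8 / 6561 * y ^ 8 - y ^ 3 =
        8 / 6561 * y ^ 2 * ((y - 3 / 2) * (y - 3)) ^ 2 * (y ^ 2 + 9 * y + 99 / 4) := by ring
  have hnonneg : 0 ≤ 8 / 6561 * |x| ^ 2 * ((|x| - 3 / 2) * (|x| - 3)) ^ 2 *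
      (|x| ^ 2 + 9 * |x| + 99 / 4) := by positivity
  rw [← hfactor, Even.pow_abs (n := 2) (by decide), Even.pow_abs (n := 4) (by decide),
    Even.pow_abs (n := 6) (by decide), Even.pow_abs (n := 8) (by decide)] at hnonneg
  linarith

theorem expect_abs_rademacherSum_pow_three_le_of_sum_sq_eq_one {s : Finset ι} {a : ι → ℝ}
    (ha : ∑ i ∈ s, a i ^ 2 = 1) : 𝔼 ε, |rademacherSum s a ε| ^ 3 ≤ 5 / 3 := by
  have hsq (i) (hi : i ∈ s) : a i ^ 2 ≤ 1 :=
    ha ▸ Finset.single_le_sum (f := fun i => a i ^ 2) (fun _ _ => sq_nonneg _) hi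
  have h4_nonneg : 0 ≤ ∑ i ∈ s, a i ^ 4 := Finset.sum_nonneg fun _ _ => by positivity
  have h8_nonneg : 0 ≤ ∑ i ∈ s, a i ^ 8 := Finset.sum_nonneg fun _ _ => by positivity
  have h4_le : ∑ i ∈ s, a i ^ 4 ≤ 1 := ha ▸ Finset.sum_le_sum fun i hi => by
    nlinarith [hsq i hi, sq_nonneg (a i)]
  have h6_le : ∑ i ∈ s, a i ^ 6 ≤ ∑ i ∈ s, a i ^ 4 := Finset.sum_le_sum fun i hi => by
    nlinarith [hsq i hi, pow_nonneg (sq_nonneg (a i)) 2]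
  calc 𝔼 ε, |rademacherSum s a ε| ^ 3
      ≤ 𝔼 ε, (11 / 18 * rademacherSum s a ε ^ 2 + 25 / 54 * rademacherSum s a ε ^ 4 -
          8 / 243 * rademacherSum s a ε ^ 6 + 8 / 6561 * rademacherSum s a ε ^ 8) :=
        Finset.expect_le_expect fun ε _ => abs_pow_three_le _
    _ ≤ 5 / 3 := by
        simp only [Finset.expect_add_distrib, Finset.expect_sub_distrib, ← Finset.mul_expect,
          expect_rademacherSum_sq, expect_rademacherSum_pow_four, expect_rademacherSum_pow_six,
          expect_rademacherSum_pow_eight, ha]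
        nlinarith

theorem expect_abs_rademacherSum_pow_three_le (s : Finset ι) (a : ι → ℝ) :
    𝔼 ε, |rademacherSum s a ε| ^ 3 ≤ 5 / 3 * √(∑ i ∈ s, a i ^ 2) ^ 3 := by
  set σ := √(∑ i ∈ s, a i ^ 2)
  have hσ_sq : σ ^ 2 = ∑ i ∈ s, a i ^ 2 := sq_sqrt (Finset.sum_nonneg fun _ _ => sq_nonneg _)
  rcases (show 0 ≤ σ from sqrt_nonneg _).eq_or_lt with h₀ | h₀
  · have ha (i) (hi : i ∈ s) : a i = 0 := by
      rw [← h₀, zero_pow two_ne_zero, eq_comm,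
        Finset.sum_eq_zero_iff_of_nonneg fun _ _ => sq_nonneg _] at hσ_sq
      exact pow_eq_zero_iff two_ne_zero |>.1 (hσ_sq i hi)
    have hR (ε : ι → ℤˣ) : rademacherSum s a ε = 0 :=
      Finset.sum_eq_zero fun i hi => by rw [ha i hi, mul_zero]
    simp [hR, ← h₀]
  · have h := expect_abs_rademacherSum_pow_three_le_of_sum_sq_eq_one (s := s)
      (a := fun i => a i / σ) (by
        simp only [div_pow, ← Finset.sum_div, ← hσ_sq]
        exact div_self (by positivity))
    simpa only [rademacherSum_div, abs_div, div_pow, abs_of_pos h₀, ← Finset.expect_div,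
      div_le_iff₀ (pow_pos h₀ 3)] using h

theorem khinchine (s : Finset ι) (a : ι → ℝ) {p : ℝ} (hp₀ : 0 < p) (hp₂ : p ≤ 2) :
    (∑ i ∈ s, ‖a i‖₊ ^ 2) ^ (p / 2) ≤ (5 / 3) ^ (2 - p) * 𝔼 ε, ‖rademacherSum s a ε‖₊ ^ p := by
  set σ : ℝ≥0 := NNReal.sqrt (∑ i ∈ s, ‖a i‖₊ ^ 2) with hσ
  have hσ_rpow : (∑ i ∈ s, ‖a i‖₊ ^ 2) ^ (p / 2) = σ ^ p := by
    rw [hσ, NNReal.sqrt_eq_rpow, ← NNReal.rpow_mul, one_div_mul_eq_div]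
  rw [hσ_rpow]
  rcases eq_or_ne σ 0 with h₀ | h₀
  · simp [h₀, NNReal.zero_rpow hp₀.ne']
  have hsecond : 𝔼 ε, ‖rademacherSum s a ε‖₊ ^ (2 : ℝ) = σ ^ 2 := by
    rw [hσ, NNReal.sq_sqrt, ← NNReal.coe_inj]
    simpa using expect_rademacherSum_sq s a
  have hthird : 𝔼 ε, ‖rademacherSum s a ε‖₊ ^ (3 : ℝ) ≤ 5 / 3 * σ ^ 3 := by
    rw [← NNReal.coe_le_coe, hσ]
    simpa [NNReal.rpow_ofNat] using expect_abs_rademacherSum_pow_three_le s a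
  have hinterp : (σ ^ 2) ^ (3 - p) ≤
      𝔼 ε, ‖rademacherSum s a ε‖₊ ^ p * (5 / 3 * σ ^ 3) ^ (2 - p) := by
    have h := expect_rpow_rpow_le (fun ε => ‖rademacherSum s a ε‖₊) hp₀.le hp₂
      (show (2 : ℝ) ≤ 3 by norm_num) (by linarith)
    rw [hsecond, show (3 : ℝ) - 2 = 1 by norm_num, NNReal.rpow_one] at h
    rw [← Finset.expect_mul]
    exact h.trans (mul_le_mul_right (NNReal.rpow_le_rpow hthird (by linarith)) _)
  have hσ_split : (σ ^ 2) ^ (3 - p) = σ ^ p * (σ ^ 3) ^ (2 - p) := by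
    rw [← NNReal.rpow_natCast, ← NNReal.rpow_natCast, ← NNReal.rpow_mul, ← NNReal.rpow_mul,
      ← NNReal.rpow_add h₀]
    congr 1
    push_cast
    ring
  rw [hσ_split, ← Finset.expect_mul, NNReal.mul_rpow, ← mul_assoc, mul_comm (𝔼 _, _)] at hinterp
  exact le_of_mul_le_mul_right hinterp (by positivity)

theorem sum_rpow_sum_sq_le_of_rademacherSum_le {β κ : Type*} [Fintype β] [Fintype κ]
    (c : β → κ → ℝ) {M : ℝ≥0} {p : ℝ} (hp₀ : 0 < p) (hp₂ : p ≤ 2)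
    (hM : ∀ ε, ∑ y, ‖rademacherSum Finset.univ (c y) ε‖₊ ^ p ≤ M) :
    ∑ y, (∑ x, ‖c y x‖₊ ^ 2) ^ (p / 2) ≤ (5 / 3) ^ (2 - p) * M := by
  classical
  calc ∑ y, (∑ x, ‖c y x‖₊ ^ 2) ^ (p / 2)
      ≤ ∑ y, (5 / 3) ^ (2 - p) * 𝔼 ε, ‖rademacherSum Finset.univ (c y) ε‖₊ ^ p :=
        Finset.sum_le_sum fun y _ => khinchine Finset.univ (c y) hp₀ hp₂
    _ = (5 / 3) ^ (2 - p) * 𝔼 ε, ∑ y, ‖rademacherSum Finset.univ (c y) ε‖₊ ^ p := by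
        rw [← Finset.mul_sum, Finset.expect_sum_comm]
    _ ≤ (5 / 3) ^ (2 - p) * M := by
        gcongr
        exact Finset.expect_le Finset.univ_nonempty fun ε _ => hM ε

end Khinchine

section MultilinearForms

variable {α : Type*} [Fintype α] {n : ℕ}

/-- The `n`-linear forms on `α → ℝ`. The function space carries the supremum norm, so `‖U‖` is the
norm of `U` as a form on `ℓ_∞`. -/
abbrev SupForm (n : ℕ) (α : Type*) [Fintype α] :=
  ContinuousMultilinearMap ℝ (fun _ : Fin n => α → ℝ) ℝ

/-- The constant `(5 / 3) ^ H n`, with `H n` the `n`-th harmonic number, in the inequality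
`bohnenblust_hille` for `(n + 1)`-linear forms. -/
noncomputable def bhConst (n : ℕ) : ℝ≥0 := (5 / 3) ^ (harmonic n : ℝ)

theorem bhConst_zero : bhConst 0 = 1 := by simp [bhConst]

theorem mul_bhConst_rpow (n : ℕ) (x : ℝ≥0) :
    (5 / 3) ^ (2 - bhExponent (n + 1)) * (bhConst n * x) ^ bhExponent (n + 1) =
      (bhConst (n + 1) * x) ^ bhExponent (n + 1) := by
  have hexp : 2 - bhExponent (n + 1) = ((n : ℝ) + 1)⁻¹ * bhExponent (n + 1) := by
    unfold bhExponent
    push_cast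
    field_simp
    ring
  have hconst : bhConst (n + 1) = (5 / 3) ^ ((n : ℝ) + 1)⁻¹ * bhConst n := by
    unfold bhConst
    rw [harmonic_succ, ← NNReal.rpow_add (by positivity), add_comm]
    push_cast
    rfl
  rw [hexp, NNReal.rpow_mul, ← NNReal.mul_rpow, ← mul_assoc, ← hconst]

theorem nnnorm_units_le_one (ε : α → ℤˣ) : ‖fun x => ((ε x : ℤ) : ℝ)‖₊ ≤ 1 :=
  pi_nnnorm_le_iff.2 fun x => by rcases Int.units_eq_one_or (ε x) with h | h <;> simp [h]

theorem nnnorm_curryMid_apply_le (U : SupForm (n + 1) α) (j : Fin (n + 1)) {v : α → ℝ}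
    (hv : ‖v‖₊ ≤ 1) : ‖U.curryMid j v‖₊ ≤ ‖U‖₊ :=
  calc ‖U.curryMid j v‖₊
      ≤ ‖U.curryMid j‖₊ * ‖v‖₊ := (U.curryMid j).le_opNNNorm v
    _ ≤ ‖U.curryMid j‖₊ := mul_le_of_le_one_right' hv
    _ = ‖U‖₊ := NNReal.eq (ContinuousMultilinearMap.norm_curryMid j U)

variable [DecidableEq α]

/-- The coefficient `U (e_{i₁}, …, e_{iₙ})` of the form `U` at the multi-index `i`. -/
def basisCoeff (U : SupForm n α) (i : Fin n → α) : ℝ := U fun k => Pi.single (i k) 1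

theorem basisCoeff_curryMid (U : SupForm (n + 1) α) (j : Fin (n + 1)) (v : α → ℝ)
    (y : Fin n → α) :
    basisCoeff (U.curryMid j v) y = ∑ x, v x * basisCoeff U (j.insertNth x y) := by
  have hsingle (x : α) : basisCoeff (U.curryMid j (Pi.single x 1)) y =
      basisCoeff U (j.insertNth x y) := by
    simp only [basisCoeff, ContinuousMultilinearMap.curryMid_apply]
    congr 1
    funext k
    refine Fin.succAboveCases j ?_ (fun k => ?_) k <;> simp
  conv_lhs => rw [pi_eq_sum_univ' v, map_sum]
  simp only [map_smul, ← hsingle]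
  simp [basisCoeff]

theorem basisCoeff_curryMid_sign (U : SupForm (n + 1) α) (j : Fin (n + 1)) (ε : α → ℤˣ)
    (y : Fin n → α) :
    basisCoeff (U.curryMid j fun x => ((ε x : ℤ) : ℝ)) y =
      rademacherSum Finset.univ (fun x => basisCoeff U (j.insertNth x y)) ε :=
  basisCoeff_curryMid U j _ y

theorem nnnorm_basisCoeff_le (U : SupForm n α) (i : Fin n → α) : ‖basisCoeff U i‖₊ ≤ ‖U‖₊ := by
  simpa [basisCoeff, Pi.nnnorm_single] using U.le_opNNNorm fun k => Pi.single (i k) 1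

theorem sum_nnnorm_basisCoeff_le (U : SupForm 1 α) : ∑ i, ‖basisCoeff U i‖₊ ≤ ‖U‖₊ := by
  obtain ⟨ε, hε⟩ := exists_rademacherSum_eq_sum_abs Finset.univ
    fun x => basisCoeff U ((0 : Fin 1).insertNth x default)
  calc ∑ i, ‖basisCoeff U i‖₊
      = ∑ x, ‖basisCoeff U ((0 : Fin 1).insertNth x default)‖₊ := by
        simp only [sum_eq_sum_insertNth 0, Fintype.sum_unique]
    _ = ‖basisCoeff (U.curryMid 0 fun x => ((ε x : ℤ) : ℝ)) default‖₊ := by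
        rw [basisCoeff_curryMid_sign, hε, ← NNReal.coe_inj]
        simp only [NNReal.coe_sum, coe_nnnorm, norm_eq_abs, Finset.abs_sum_of_nonneg' fun x =>
          abs_nonneg (basisCoeff U ((0 : Fin 1).insertNth x default))]
    _ ≤ ‖U‖₊ :=
        (nnnorm_basisCoeff_le _ _).trans (nnnorm_curryMid_apply_le U 0 (nnnorm_units_le_one ε))

theorem bohnenblust_hille (n : ℕ) (U : SupForm (n + 1) α) :
    ∑ i, ‖basisCoeff U i‖₊ ^ bhExponent (n + 1) ≤ (bhConst n * ‖U‖₊) ^ bhExponent (n + 1) := by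
  induction n with
  | zero =>
    have hexp : bhExponent (0 + 1) = 1 := by norm_num [bhExponent]
    simpa only [hexp, NNReal.rpow_one, bhConst_zero, one_mul] using sum_nnnorm_basisCoeff_le U
  | succ n ih =>
    have hsign (j : Fin (n + 2)) (ε : α → ℤˣ) :
        ∑ y, ‖rademacherSum Finset.univ (fun x => basisCoeff U (j.insertNth x y)) ε‖₊ ^
          bhExponent (n + 1) ≤ (bhConst n * ‖U‖₊) ^ bhExponent (n + 1) := by
      simp only [← basisCoeff_curryMid_sign]
      refine (ih _).trans ?_
      gcongr
      · exact (bhExponent_succ_pos n).le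
      · exact nnnorm_curryMid_apply_le U j (nnnorm_units_le_one ε)
    refine blei _ fun j => ?_
    rw [← mul_bhConst_rpow]
    exact sum_rpow_sum_sq_le_of_rademacherSum_le _ (bhExponent_succ_pos n) (bhExponent_le_two _)
      (hsign j)

end MultilinearForms

section ConstantGrowth

theorem harmonic_le_harmonic_add_log {k m : ℕ} (hk : 0 < k) (hkm : k ≤ m) :
    (harmonic m : ℝ) ≤ harmonic k + log (m / k) := by
  have h := strictAnti_eulerMascheroniSeq'.antitone hkm
  simp only [eulerMascheroniSeq', hk.ne', (hk.trans_le hkm).ne', if_false] at h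
  rw [log_div (by exact_mod_cast (hk.trans_le hkm).ne') (by exact_mod_cast hk.ne')]
  linarith

theorem log_five_thirds_le : log (5 / 3) ≤ 0.526 := by
  rw [log_le_iff_le_exp (by norm_num)]
  refine le_trans ?_ (sum_le_exp_of_nonneg (x := 0.526) (by norm_num) 5)
  norm_num [Finset.sum_range_succ, Nat.factorial]

theorem rpow_harmonic_sixteen_lt :
    (5 / 3 : ℝ) ^ (harmonic 16 : ℝ) < 1.338887 * 16 ^ (0.526322 : ℝ) :=
  calc (5 / 3 : ℝ) ^ (harmonic 16 : ℝ)
      ≤ (5 / 3) ^ (3.4 : ℝ) := by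
        refine rpow_le_rpow_of_exponent_le (by norm_num) ?_
        norm_num [harmonic, Finset.sum_range_succ]
    _ < 1.338887 * 2 ^ (2.1 : ℝ) := by
        refine lt_of_pow_lt_pow_left₀ 20 (by positivity) ?_
        rw [mul_pow, ← rpow_mul_natCast (by norm_num), ← rpow_mul_natCast (by norm_num),
          show (3.4 : ℝ) * (20 : ℕ) = (68 : ℕ) by norm_num,
          show (2.1 : ℝ) * (20 : ℕ) = (42 : ℕ) by norm_num, rpow_natCast, rpow_natCast]
        norm_num
    _ ≤ 1.338887 * 16 ^ (0.526322 : ℝ) := by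
        rw [show (16 : ℝ) = 2 ^ (4 : ℝ) by norm_num, ← rpow_mul (by norm_num)]
        gcongr <;> norm_num

theorem bhConst_lt {m : ℕ} (hm : 16 ≤ m) :
    (bhConst m : ℝ) < 1.338887 * (m : ℝ) ^ (0.526322 : ℝ) := by
  have hm₁ : (1 : ℝ) ≤ m / 16 := by
    rw [one_le_div (by norm_num)]
    exact_mod_cast hm
  have hm₀ : (0 : ℝ) < m / 16 := by positivity
  have hgrowth : (5 / 3 : ℝ) ^ log (m / 16) ≤ (m / 16 : ℝ) ^ (0.526322 : ℝ) := by
    rw [rpow_def_of_pos (by norm_num), rpow_def_of_pos hm₀, mul_comm]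
    gcongr
    · exact log_nonneg hm₁
    · exact log_five_thirds_le.trans (by norm_num)
  calc (bhConst m : ℝ)
      = (5 / 3 : ℝ) ^ (harmonic m : ℝ) := by simp [bhConst]
    _ ≤ (5 / 3) ^ (harmonic 16 + log (m / 16)) := by
        refine rpow_le_rpow_of_exponent_le (by norm_num) ?_
        exact_mod_cast harmonic_le_harmonic_add_log (by norm_num) hm
    _ = (5 / 3) ^ (harmonic 16 : ℝ) * (5 / 3) ^ log (m / 16) := rpow_add (by norm_num) _ _
    _ < 1.338887 * 16 ^ (0.526322 : ℝ) * (m / 16 : ℝ) ^ (0.526322 : ℝ) :=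
        mul_lt_mul rpow_harmonic_sixteen_lt hgrowth (by positivity) (by positivity)
    _ = 1.338887 * (m : ℝ) ^ (0.526322 : ℝ) := by
        rw [mul_assoc, ← mul_rpow (by norm_num) hm₀.le, mul_div_cancel₀ _ (by norm_num)]

end ConstantGrowth

theorem BHreal_le (n N : ℕ) (U : SupForm (n + 1) (Fin N)) :
    BHreal (n + 1) N U ≤ bhConst n * ‖U‖ := by
  have hexp : (((n + 1 : ℕ) : ℝ) + 1) / (2 * (n + 1 : ℕ)) = (bhExponent (n + 1))⁻¹ :=
    (inv_div _ _).symm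
  have hp := bhExponent_succ_pos n
  have h : ∑ i, |basisCoeff U i| ^ bhExponent (n + 1) ≤
      (bhConst n * ‖U‖) ^ bhExponent (n + 1) := by
    have := NNReal.coe_le_coe.2 (bohnenblust_hille n U)
    push_cast at this
    exact this
  calc BHreal (n + 1) N U
      = (∑ i, |basisCoeff U i| ^ bhExponent (n + 1)) ^ (bhExponent (n + 1))⁻¹ := by
        rw [BHreal, hexp]
        rfl
    _ ≤ ((bhConst n * ‖U‖) ^ bhExponent (n + 1)) ^ (bhExponent (n + 1))⁻¹ := by gcongr
    _ = bhConst n * ‖U‖ := rpow_rpow_inv (by positivity) hp.ne'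

theorem stmt5 (n : ℕ) (hn : 16 < n) (N : ℕ) (hN : 0 < N)
    (U : ContinuousMultilinearMap ℝ (fun _ : Fin n => (Fin N → ℝ)) ℝ)
    (hU : 0 < ‖U‖) :
    BHreal n N U < 1.338887 * ((n : ℝ) - 1) ^ (0.526322 : ℝ) * ‖U‖ := by
  obtain ⟨m, rfl⟩ : ∃ m, n = m + 1 := ⟨n - 1, by omega⟩
  calc BHreal (m + 1) N U
      ≤ bhConst m * ‖U‖ := BHreal_le m N U
    _ < 1.338887 * (m : ℝ) ^ (0.526322 : ℝ) * ‖U‖ :=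
        mul_lt_mul_of_pos_right (bhConst_lt (by omega)) hU
    _ = 1.338887 * (((m + 1 : ℕ) : ℝ) - 1) ^ (0.526322 : ℝ) * ‖U‖ := by
        rw [Nat.cast_add_one, add_sub_cancel_right]
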